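/- arXiv:2412.16338 — 2 statements merged into one kernel-verified Lean document; each statement's English description precedes it below -/
import Mathlib

section
/- If G satisfies conditions (G) with q > 1, then G_p ∈ B_q; more precisely ‖G_p‖ ≤ C_{d,p,q} where C_{d,p,q} = 2(p+1)^{(q+1)/d} sup_{k∈ℝ}(1+|k|^q)(1+|k|) Σ_{j=0}^{2} |∂_ω^j Ĝ(k,1)|. -/
open MeasureTheory Filter Topology

noncomputable section

/-- Fourier transform, convention `f̂ ω = ∫ e^{-iωx} f x dx`. -/
def FT (f : ℝ → ℂ) (ω : ℝ) : ℂ :=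
  ∫ x : ℝ, Complex.exp (-(Complex.I * ω * x)) * f x

/-- Fourier transform of a real-valued function. -/
def FTr (f : ℝ → ℝ) : ℝ → ℂ := FT fun x => (f x : ℂ)

/-- The quantity whose supremum over `ω` defines the `B_q` norm. -/
def bqFun (q : ℝ) (f : ℝ → ℂ) (ω : ℝ) : ℝ :=
  (1 + |ω| ^ q) * (‖FT f ω‖ + ‖deriv (FT f) ω‖ + ‖deriv (deriv (FT f)) ω‖)

/-- The `B_q` norm `‖f‖ = sup_ω (1+|ω|^q)(|f̂(ω)|+|f̂′(ω)|+|f̂″(ω)|)`. -/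
def bqNorm (q : ℝ) (f : ℝ → ℂ) : ℝ := ⨆ ω : ℝ, bqFun q f ω

/-- The `B_q` norm of a real-valued function. -/
def bqNormR (q : ℝ) (f : ℝ → ℝ) : ℝ := bqNorm q fun x => (f x : ℂ)

/-- Membership in the space `B_q`: `f ∈ L¹`, `f̂ ∈ C²`, finite `B_q` norm. -/
def MemBq (q : ℝ) (f : ℝ → ℂ) : Prop :=
  Integrable f ∧ ContDiff ℝ 2 (FT f) ∧ BddAbove (Set.range (bqFun q f))

/-- Membership in `B_q` for a real-valued function. -/
def MemBqR (q : ℝ) (f : ℝ → ℝ) : Prop := MemBq q fun x => (f x : ℂ)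

/-- Condition (G1): there is an integer `M > 0` such that `G(·,1) ∈ C^{q+2}` with
polynomial decay of all derivatives up to order `q+2`. -/
def CondG1 (G : ℝ → ℝ → ℝ) (q : ℕ) : Prop :=
  ∃ M : ℕ, 0 < M ∧ ContDiff ℝ (q + 2 : ℕ) (fun x => G x 1) ∧
    ∀ j ≤ q + 2, ∃ B : ℝ, ∀ x : ℝ,
      (1 + |x| + x ^ 2) * (1 + |x|) ^ (M + 1) *
        |iteratedDeriv j (fun y => G y 1) x| ≤ B

/-- Condition (G2): scaling `G(x,t) = t^{-1/d} G(t^{-1/d}x, 1)`. -/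
def CondG2 (G : ℝ → ℝ → ℝ) (d : ℝ) : Prop :=
  ∀ x t : ℝ, 0 < t →
    G x t = t ^ (-(1 : ℝ) / d) * G (t ^ (-(1 : ℝ) / d) * x) 1

/-- Condition (G3): the semigroup (convolution) property. -/
def CondG3 (G : ℝ → ℝ → ℝ) : Prop :=
  ∀ x t τ : ℝ, 0 < τ → τ < t → G x t = ∫ y : ℝ, G (x - y) (t - τ) * G y τ

/-- Conditions (G). -/
def CondsG (G : ℝ → ℝ → ℝ) (q : ℕ) (d : ℝ) : Prop :=
  CondG1 G q ∧ CondG2 G d ∧ CondG3 G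

/-- Hypotheses on the coefficient `c`: positive, locally integrable on `(1,∞)`,
and `c(t) = t^p + o(t^p)` as `t → ∞`. -/
def CondC (c : ℝ → ℝ) (p : ℝ) : Prop :=
  0 < p ∧ (∀ t : ℝ, 1 < t → 0 < c t) ∧
    LocallyIntegrableOn c (Set.Ioi 1) ∧
    (fun t => c t - t ^ p) =o[atTop] fun t => t ^ p

/-- `s(t) = ∫₁ᵗ c(τ) dτ`. -/
def sF (c : ℝ → ℝ) (t : ℝ) : ℝ := ∫ τ in (1:ℝ)..t, c τ

/-- `r(t) = s(t) − (t^{p+1}−1)/(p+1)`. -/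
def rF (c : ℝ → ℝ) (p t : ℝ) : ℝ := sF c t - (t ^ (p + 1) - 1) / (p + 1)

/-- Hypothesis on `L₀`: `L₀ > 1` and `|r(L)|/L^{p+1} < 1/(4(p+1))` for `L > L₀`. -/
def CondL0 (c : ℝ → ℝ) (p L₀ : ℝ) : Prop :=
  1 < L₀ ∧ ∀ L : ℝ, L₀ < L → |rF c p L| / L ^ (p + 1) < 1 / (4 * (p + 1))

/-- `L₁ = max {L₀, 3^{1/(p+1)}}`. -/
def Lone (p L₀ : ℝ) : ℝ := max L₀ ((3:ℝ) ^ ((1:ℝ) / (p + 1)))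

/-- `s_n(t) = (s(Lⁿt) − s(Lⁿ))/L^{n(p+1)}`. -/
def sn (c : ℝ → ℝ) (p L : ℝ) (n : ℕ) (t : ℝ) : ℝ :=
  (sF c (L ^ n * t) - sF c (L ^ n)) / L ^ ((n : ℝ) * (p + 1))

/-- `u_f(x,t) = ∫ G(x−y, s_n(t)) f(y) dy`. -/
def linSol (G : ℝ → ℝ → ℝ) (c : ℝ → ℝ) (p L : ℝ) (n : ℕ) (f : ℝ → ℝ)
    (x t : ℝ) : ℝ :=
  ∫ y : ℝ, G (x - y) (sn c p L n t) * f y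

/-- The linear RG operator `(R⁰_{L,n}f)(x) = L^{2(p+1)/d} u_f(L^{(p+1)/d}x, L)`. -/
def RG0 (G : ℝ → ℝ → ℝ) (c : ℝ → ℝ) (p d L : ℝ) (n : ℕ) (f : ℝ → ℝ) :
    ℝ → ℝ := fun x =>
  L ^ (2 * (p + 1) / d) * linSol G c p L n f (L ^ ((p + 1) / d) * x) L

/-- `R⁰_{Lⁿ} = R⁰_{L,n−1} ∘ ⋯ ∘ R⁰_{L,0}`. -/
def RG0iter (G : ℝ → ℝ → ℝ) (c : ℝ → ℝ) (p d L : ℝ) :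
    ℕ → (ℝ → ℝ) → ℝ → ℝ
  | 0 => fun f => f
  | n + 1 => fun f => RG0 G c p d L n (RG0iter G c p d L n f)

/-- `G_p(x) = ∂ₓ G(x, 1/(p+1))`. -/
def Gp (G : ℝ → ℝ → ℝ) (p : ℝ) : ℝ → ℝ :=
  fun x => deriv (fun y => G y (1 / (p + 1))) x

/-- The nonlinearity `F(u,u_x)(y,τ) = Σ_j a_j u(y,τ)^j ∂ₓu(y,τ)`. -/
def Fnl (a : ℕ → ℝ) (u : ℝ → ℝ → ℝ) (y τ : ℝ) : ℝ :=
  ∑' j : ℕ, a j * u y τ ^ j * deriv (fun z => u z τ) y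

/-- The coefficients define a series analytic at the origin with positive
radius of convergence. -/
def AnalyticCoeffs (a : ℕ → ℝ) : Prop :=
  ∃ ρ : ℝ, 0 < ρ ∧ ∀ z : ℝ, |z| < ρ → Summable fun j : ℕ => |a j| * |z| ^ j

/-- `u` solves the nonlinear integral equation for all `t > 1`. -/
def SolvesNL (G : ℝ → ℝ → ℝ) (c : ℝ → ℝ) (lam : ℝ) (a : ℕ → ℝ)
    (f : ℝ → ℝ) (u : ℝ → ℝ → ℝ) : Prop :=
  ∀ x : ℝ, ∀ t : ℝ, 1 < t → u x t =
    (∫ y : ℝ, G (x - y) (sF c t) * f y) +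
      lam * ∫ τ in (1:ℝ)..t, ∫ y : ℝ,
        G (x - y) (sF c t - sF c τ) * Fnl a u y τ

/-- The norm `‖u‖_L = sup_{t∈[1,L]} ‖u(·,t)‖` on `B^{(L)}`. -/
def normL (q L : ℝ) (u : ℝ → ℝ → ℝ) : ℝ :=
  ⨆ t : Set.Icc (1:ℝ) L, bqNormR q fun x => u x (t : ℝ)

/-- `d_F = (2α+3)(p+1) − 2(p+1) − d`. -/
def dF (p d : ℝ) (α : ℕ) : ℝ := (2 * (α : ℝ) + 3) * (p + 1) - 2 * (p + 1) - d

/-- The generalized coupling constant `λ_n = L^{-(n/d)[(2α+3)(p+1)−2(p+1)−d]} λ`. -/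
def lamn (lam p d L : ℝ) (α n : ℕ) : ℝ :=
  L ^ (-((n : ℝ) / d) * dF p d α) * lam

/-- The renormalized nonlinearity `F_{L,n}`. -/
def FnlRen (a : ℕ → ℝ) (p d L : ℝ) (α n : ℕ) (u : ℝ → ℝ → ℝ)
    (y τ : ℝ) : ℝ :=
  ∑' j : ℕ, a j * L ^ (2 * (n : ℝ) / d * (p + 1) * ((α : ℝ) - (j : ℝ))) *
    u y τ ^ j * deriv (fun z => u z τ) y

/-- The rescaled solution `u_n(x,t) = L^{2n(p+1)/d} u(L^{n(p+1)/d}x, Lⁿt)`. -/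
def resc (u : ℝ → ℝ → ℝ) (p d L : ℝ) (n : ℕ) (x t : ℝ) : ℝ :=
  L ^ (2 * (n : ℝ) * (p + 1) / d) *
    u (L ^ ((n : ℝ) * (p + 1) / d) * x) (L ^ n * t)

/-- `u` solves the `n`-th renormalized integral equation on `[1,L]` with data `f`. -/
def SolvesRen (G : ℝ → ℝ → ℝ) (c : ℝ → ℝ) (lam p d L : ℝ) (a : ℕ → ℝ)
    (α n : ℕ) (f : ℝ → ℝ) (u : ℝ → ℝ → ℝ) : Prop :=
  ∀ x : ℝ, ∀ t ∈ Set.Icc (1:ℝ) L, u x t =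
    (∫ y : ℝ, G (x - y) (sn c p L n t) * f y) +
      lamn lam p d L α n * ∫ τ in (1:ℝ)..t, ∫ y : ℝ,
        G (x - y) (sn c p L n t - sn c p L n τ) * FnlRen a p d L α n u y τ

end
/-!
A dilation by `a ≥ 1` only shrinks the derivatives of a Fourier transform, so everything reduces to
the identity `Ĝ_p(ω) = a · (ik Ĝ(k,1))` at `k = ω/a`, where `a = (p+1)^{1/d}` is the dilation that
(G2) attaches to the time `1/(p+1)`. The Leibniz rule for `k Ĝ(k,1)` gives the factor `2(1+|k|)`,
the dilation of the weight `1+|ω|^q` gives `a^q`, and the amplitude gives the last factor `a`. The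
supremum is finite because (G1) makes the moments of order at most `2` of the derivatives of
`G(·,1)` integrable, so that `Ĝ(·,1)` and its first two derivatives decay polynomially.
-/

section TwoJet

variable {E : Type*} [NormedAddCommGroup E] [NormedSpace ℝ E]

/-- The pointwise size `|F| + |F′| + |F″|` of the 2-jet of `F`; applied to a Fourier transform, it
is the quantity weighted in the `B_q` norm. -/
noncomputable def twoJetNorm (F : ℝ → E) (x : ℝ) : ℝ :=
  ‖F x‖ + ‖deriv F x‖ + ‖deriv (deriv F) x‖

lemma twoJetNorm_nonneg (F : ℝ → E) (x : ℝ) : 0 ≤ twoJetNorm F x := by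
  unfold twoJetNorm
  positivity

lemma twoJetNorm_eq_sum_iteratedDeriv (F : ℝ → E) (x : ℝ) :
    twoJetNorm F x = ∑ j ∈ Finset.range 3, ‖iteratedDeriv j F x‖ := by
  simp [twoJetNorm, Finset.sum_range_succ, iteratedDeriv_succ]

lemma twoJetNorm_comp_mul_left_le {c : ℝ} (hc : |c| ≤ 1) (F : ℝ → E) (x : ℝ) :
    twoJetNorm (fun y => F (c * y)) x ≤ twoJetNorm F (c * x) := by
  have hderiv : deriv (fun y => F (c * y)) = fun y => c • deriv F (c * y) :=
    funext (deriv_comp_mul_left c F)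
  have hderiv₂ : deriv (deriv fun y => F (c * y)) x = c • c • deriv (deriv F) (c * x) := by
    rw [hderiv, deriv_fun_const_smul_field, deriv_comp_mul_left]
  have shrink (v : E) : ‖c • v‖ ≤ ‖v‖ := by
    rw [norm_smul]
    exact mul_le_of_le_one_left (norm_nonneg v) hc
  unfold twoJetNorm
  rw [hderiv₂, hderiv]
  gcongr
  · exact shrink _
  · exact (shrink _).trans (shrink _)

lemma twoJetNorm_const_mul {𝕜 : Type*} [NormedField 𝕜] [NormedAlgebra ℝ 𝕜] (b : 𝕜) (F : ℝ → 𝕜)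
    (x : ℝ) :
    twoJetNorm (fun y => b * F y) x = ‖b‖ * twoJetNorm F x := by
  simp [twoJetNorm, mul_add]

lemma twoJetNorm_id_smul_le {F : ℝ → E} (hF : ContDiff ℝ 2 F) (x : ℝ) :
    twoJetNorm (fun y => y • F y) x ≤ 2 * (1 + |x|) * twoJetNorm F x := by
  have hF₁ : Differentiable ℝ F := hF.differentiable (by simp)
  have hF₂ : Differentiable ℝ (deriv F) := hF.differentiable_deriv_two
  have hderiv : deriv (fun y => y • F y) = fun y => y • deriv F y + F y := by
    funext y
    simpa using ((hasDerivAt_id y).fun_smul (hF₁ y).hasDerivAt).deriv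
  have hderiv₂ : deriv (deriv fun y => y • F y) x =
      x • deriv (deriv F) x + deriv F x + deriv F x := by
    rw [hderiv]
    simpa using (((hasDerivAt_id x).fun_smul (hF₂ x).hasDerivAt).fun_add (hF₁ x).hasDerivAt).deriv
  have bound₁ : ‖deriv (fun y => y • F y) x‖ ≤ |x| * ‖deriv F x‖ + ‖F x‖ := by
    rw [hderiv]
    exact (norm_add_le _ _).trans_eq (by rw [norm_smul, Real.norm_eq_abs])
  have bound₂ : ‖deriv (deriv fun y => y • F y) x‖ ≤
      |x| * ‖deriv (deriv F) x‖ + ‖deriv F x‖ + ‖deriv F x‖ := by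
    rw [hderiv₂]
    exact norm_add₃_le.trans_eq (by rw [norm_smul, Real.norm_eq_abs])
  calc twoJetNorm (fun y => y • F y) x
      ≤ |x| * ‖F x‖ + (|x| * ‖deriv F x‖ + ‖F x‖) +
          (|x| * ‖deriv (deriv F) x‖ + ‖deriv F x‖ + ‖deriv F x‖) := by
        unfold twoJetNorm
        gcongr
        rw [norm_smul, Real.norm_eq_abs]
    _ ≤ 2 * (1 + |x|) * twoJetNorm F x := by
        unfold twoJetNorm
        have : 0 ≤ (1 + |x|) * ‖F x‖ + |x| * ‖deriv F x‖ + (2 + |x|) * ‖deriv (deriv F) x‖ := by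
          positivity
        linarith

end TwoJet

section Dilation

variable {E : Type*} [NormedAddCommGroup E] [NormedSpace ℝ E]

/-- The integral-preserving dilation `x ↦ a f(ax)`; in these terms (G2) says that `G(·,t)` is the
dilation of `G(·,1)` by `t^{-1/d}`. -/
def dilate (a : ℝ) (f : ℝ → E) (x : ℝ) : E := a • f (a * x)

lemma deriv_dilate (a : ℝ) (f : ℝ → E) :
    deriv (dilate a f) = fun x => a • dilate a (deriv f) x := by
  funext x
  unfold dilate
  rw [deriv_fun_const_smul_field, deriv_comp_mul_left]

lemma integrable_dilate {a : ℝ} (ha : a ≠ 0) {f : ℝ → E} (hf : Integrable f) :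
    Integrable (dilate a f) :=
  (hf.comp_mul_left' ha).smul a

lemma differentiable_dilate (a : ℝ) {f : ℝ → E} (hf : Differentiable ℝ f) :
    Differentiable ℝ (dilate a f) :=
  (hf.comp (differentiable_id.const_mul a)).const_smul a

lemma deriv_ofReal_comp {g : ℝ → ℝ} (hg : Differentiable ℝ g) :
    deriv (fun x => (g x : ℂ)) = fun x => ((deriv g x : ℝ) : ℂ) :=
  funext fun x => (hg x).hasDerivAt.ofReal_comp.deriv

lemma ofReal_deriv_dilate (a : ℝ) {g : ℝ → ℝ} (hg : Differentiable ℝ g) :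
    (fun x => ((deriv (dilate a g) x : ℝ) : ℂ)) = deriv (dilate a fun x => (g x : ℂ)) := by
  have hcast : (fun x => ((dilate a g x : ℝ) : ℂ)) = dilate a fun x => (g x : ℂ) :=
    funext fun x => by simp [dilate]
  rw [← deriv_ofReal_comp (differentiable_dilate a hg), hcast]

end Dilation

section Weights

lemma one_add_abs_mul_rpow_le {a q : ℝ} (ha : 1 ≤ a) (hq : 0 ≤ q) (k : ℝ) :
    1 + |a * k| ^ q ≤ a ^ q * (1 + |k| ^ q) := by
  have ha₀ : 0 ≤ a := zero_le_one.trans ha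
  rw [abs_mul, abs_of_nonneg ha₀, Real.mul_rpow ha₀ (abs_nonneg k), mul_add, mul_one]
  gcongr
  exact Real.one_le_rpow ha hq

lemma one_add_rpow_mul_one_add_le {x q : ℝ} {n : ℕ} (hx : 0 ≤ x) (hq : 0 ≤ q) (hqn : q + 1 ≤ n) :
    (1 + x ^ q) * (1 + x) ≤ 2 * (1 + x) ^ n := by
  have hone : 1 ≤ (1 + x) ^ q := Real.one_le_rpow (by linarith) hq
  have hxq : x ^ q ≤ (1 + x) ^ q := Real.rpow_le_rpow hx (by linarith) hq
  calc (1 + x ^ q) * (1 + x) ≤ 2 * (1 + x) ^ q * (1 + x) := by gcongr; linarith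
    _ = 2 * (1 + x) ^ (q + 1) := by rw [Real.rpow_add_one (by positivity), mul_assoc]
    _ ≤ 2 * (1 + x) ^ (n : ℝ) := by gcongr; linarith
    _ = 2 * (1 + x) ^ n := by rw [Real.rpow_natCast]

end Weights

section FourierTransform

open scoped FourierTransform

lemma FT_eq_fourier_comp_mul_left (f : ℝ → ℂ) :
    FT f = fun ω => 𝓕 f ((2 * Real.pi)⁻¹ * ω) := by
  funext ω
  rw [Real.fourier_real_eq_integral_exp_smul]
  refine integral_congr_ae (Eventually.of_forall fun x => ?_)
  have hπ : (Real.pi : ℂ) ≠ 0 := by exact_mod_cast Real.pi_ne_zero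
  simp only [smul_eq_mul]
  congr 2
  push_cast
  field_simp

lemma FT_deriv {f : ℝ → ℂ} (hf : Integrable f) (hdiff : Differentiable ℝ f)
    (hf' : Integrable (deriv f)) (ω : ℝ) : FT (deriv f) ω = Complex.I * (ω • FT f ω) := by
  have hπ : (Real.pi : ℂ) ≠ 0 := by exact_mod_cast Real.pi_ne_zero
  simp only [FT_eq_fourier_comp_mul_left, Real.fourier_deriv hf hdiff hf', smul_eq_mul,
    Complex.real_smul]
  push_cast
  field_simp

lemma FT_dilate {a : ℝ} (ha : 0 < a) (f : ℝ → ℂ) (ω : ℝ) :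
    FT (dilate a f) ω = FT f (a⁻¹ * ω) := by
  have ha' : (a : ℂ) ≠ 0 := by exact_mod_cast ha.ne'
  set h : ℝ → ℂ := fun y => Complex.exp (-(Complex.I * (a⁻¹ * ω : ℝ) * y)) * f y
  calc FT (dilate a f) ω = ∫ x, a • h (a * x) := by
        refine integral_congr_ae (Eventually.of_forall fun x => ?_)
        have hphase : Complex.I * (a⁻¹ * ω : ℝ) * (a * x : ℝ) = Complex.I * ω * x := by
          push_cast
          field_simp
        simp only [dilate, h, hphase, mul_smul_comm]
    _ = a • |a⁻¹| • ∫ y, h y := by rw [integral_smul, Measure.integral_comp_mul_left]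
    _ = FT f (a⁻¹ * ω) := by
        rw [abs_of_pos (inv_pos.2 ha), smul_inv_smul₀ ha.ne']
        rfl

end FourierTransform

/-- Membership in the weighted Sobolev space `W^{N,1}` with weights up to `|x|^K`: `f` is of class
`C^N` and the moments of order at most `K` of its derivatives of order at most `N` are finite.
The derivatives are Fréchet derivatives as in Mathlib's estimates on Fourier transforms. -/
structure HasIntegrableMoments {E : Type*} [NormedAddCommGroup E] [NormedSpace ℝ E] (K N : ℕ)
    (f : ℝ → E) : Prop where
  contDiff : ContDiff ℝ N f
  integrable_moment : ∀ k ≤ K, ∀ n ≤ N,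
    Integrable fun x : ℝ => ‖x‖ ^ k * ‖iteratedFDeriv ℝ n f x‖

namespace HasIntegrableMoments

open scoped FourierTransform

section RealSpace

variable {E : Type*} [NormedAddCommGroup E] [NormedSpace ℝ E] {K N : ℕ} {f : ℝ → E}

lemma integrable_iteratedDeriv (hf : HasIntegrableMoments K N f) {n : ℕ} (hn : n ≤ N) :
    Integrable (iteratedDeriv n f) := by
  have hcont : Continuous (iteratedDeriv n f) :=
    hf.contDiff.continuous_iteratedDeriv n (by exact_mod_cast hn)
  rw [← integrable_norm_iff hcont.aestronglyMeasurable]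
  simpa [norm_iteratedFDeriv_eq_norm_iteratedDeriv] using hf.integrable_moment 0 K.zero_le n hn

lemma integrable (hf : HasIntegrableMoments K N f) : Integrable f := by
  simpa using hf.integrable_iteratedDeriv N.zero_le

lemma integrable_deriv (hf : HasIntegrableMoments K N f) (hN : 1 ≤ N) : Integrable (deriv f) := by
  simpa using hf.integrable_iteratedDeriv hN

lemma differentiable (hf : HasIntegrableMoments K N f) (hN : 1 ≤ N) : Differentiable ℝ f :=
  hf.contDiff.differentiable (by exact_mod_cast Nat.one_le_iff_ne_zero.mp hN)

lemma integrable_deriv_dilate (hf : HasIntegrableMoments K N f) (hN : 1 ≤ N) {a : ℝ} (ha : a ≠ 0) :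
    Integrable (deriv (dilate a f)) := by
  rw [deriv_dilate]
  exact (integrable_dilate ha (hf.integrable_deriv hN)).smul a

end RealSpace

section ComplexSpace

variable {E : Type*} [NormedAddCommGroup E] [NormedSpace ℂ E] {K N : ℕ} {f : ℝ → E}

lemma contDiff_fourier (hf : HasIntegrableMoments K N f) : ContDiff ℝ K (𝓕 f) := by
  refine mod_cast Real.contDiff_fourier (N := (K : ℕ∞)) fun k hk => ?_
  simpa using hf.integrable_moment k (by exact_mod_cast hk) 0 N.zero_le

lemma exists_pow_mul_norm_iteratedDeriv_fourier_le (hf : HasIntegrableMoments K N f)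
    {k n : ℕ} (hk : k ≤ K) (hn : n ≤ N) :
    ∃ C, ∀ ξ : ℝ, |ξ| ^ n * ‖iteratedDeriv k (𝓕 f) ξ‖ ≤ C := by
  simp only [← norm_iteratedFDeriv_eq_norm_iteratedDeriv]
  exact ⟨_, fun ξ => Real.pow_mul_norm_iteratedFDeriv_fourier_le (K := K) (N := (N : ℕ∞))
    (by exact_mod_cast hf.contDiff)
    (fun k n hk hn => hf.integrable_moment k (by exact_mod_cast hk) n (by exact_mod_cast hn))
    (by exact_mod_cast hk) (by exact_mod_cast hn) ξ⟩

lemma exists_one_add_abs_pow_mul_norm_iteratedDeriv_fourier_le (hf : HasIntegrableMoments K N f)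
    {k : ℕ} (hk : k ≤ K) : ∃ C, ∀ ξ : ℝ, (1 + |ξ|) ^ N * ‖iteratedDeriv k (𝓕 f) ξ‖ ≤ C := by
  obtain ⟨C₀, hC₀⟩ := hf.exists_pow_mul_norm_iteratedDeriv_fourier_le hk N.zero_le
  obtain ⟨C₁, hC₁⟩ := hf.exists_pow_mul_norm_iteratedDeriv_fourier_le hk le_rfl
  refine ⟨2 ^ (N - 1) * (C₀ + C₁), fun ξ => ?_⟩
  calc (1 + |ξ|) ^ N * ‖iteratedDeriv k (𝓕 f) ξ‖
      ≤ 2 ^ (N - 1) * (1 ^ N + |ξ| ^ N) * ‖iteratedDeriv k (𝓕 f) ξ‖ := by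
        gcongr
        exact add_pow_le zero_le_one (abs_nonneg ξ) N
    _ = 2 ^ (N - 1) * (|ξ| ^ 0 * ‖iteratedDeriv k (𝓕 f) ξ‖ +
          |ξ| ^ N * ‖iteratedDeriv k (𝓕 f) ξ‖) := by ring
    _ ≤ 2 ^ (N - 1) * (C₀ + C₁) := by
        gcongr
        exacts [hC₀ ξ, hC₁ ξ]

lemma exists_one_add_abs_pow_mul_twoJetNorm_fourier_le (hf : HasIntegrableMoments 2 N f) :
    ∃ C, ∀ ξ : ℝ, (1 + |ξ|) ^ N * twoJetNorm (𝓕 f) ξ ≤ C := by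
  have hdecay (k : ℕ) (hk : k ∈ Finset.range 3) :=
    hf.exists_one_add_abs_pow_mul_norm_iteratedDeriv_fourier_le
      (Nat.le_of_lt_succ (Finset.mem_range.mp hk))
  choose! C hC using hdecay
  refine ⟨∑ k ∈ Finset.range 3, C k, fun ξ => ?_⟩
  rw [twoJetNorm_eq_sum_iteratedDeriv, Finset.mul_sum]
  exact Finset.sum_le_sum fun k hk => hC k hk ξ

end ComplexSpace

variable {K N : ℕ} {f : ℝ → ℂ}

lemma contDiff_FT (hf : HasIntegrableMoments K N f) : ContDiff ℝ K (FT f) := by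
  rw [FT_eq_fourier_comp_mul_left]
  exact hf.contDiff_fourier.comp (by fun_prop)

lemma exists_one_add_abs_pow_mul_twoJetNorm_FT_le (hf : HasIntegrableMoments 2 N f) :
    ∃ C, ∀ ω : ℝ, (1 + |ω|) ^ N * twoJetNorm (FT f) ω ≤ C := by
  obtain ⟨C, hC⟩ := hf.exists_one_add_abs_pow_mul_twoJetNorm_fourier_le
  set b : ℝ := 2 * Real.pi
  have hb₁ : 1 ≤ b := by linarith [Real.two_le_pi]
  have hb_inv : |b⁻¹| ≤ 1 := by
    rw [abs_of_pos (by positivity)]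
    exact inv_le_one_of_one_le₀ hb₁
  have hjet (ω : ℝ) : twoJetNorm (FT f) ω ≤ twoJetNorm (𝓕 f) (b⁻¹ * ω) := by
    rw [FT_eq_fourier_comp_mul_left]
    exact twoJetNorm_comp_mul_left_le hb_inv _ ω
  have hweight (ω : ℝ) : 1 + |ω| ≤ b * (1 + |b⁻¹ * ω|) := by
    have := one_add_abs_mul_rpow_le hb₁ zero_le_one (b⁻¹ * ω)
    rwa [mul_inv_cancel_left₀ (by positivity), Real.rpow_one, Real.rpow_one, Real.rpow_one] at this
  refine ⟨b ^ N * C, fun ω => ?_⟩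
  calc (1 + |ω|) ^ N * twoJetNorm (FT f) ω
      ≤ (b * (1 + |b⁻¹ * ω|)) ^ N * twoJetNorm (𝓕 f) (b⁻¹ * ω) := by
        have := twoJetNorm_nonneg (FT f) ω
        gcongr
        exacts [hweight ω, hjet ω]
    _ = b ^ N * ((1 + |b⁻¹ * ω|) ^ N * twoJetNorm (𝓕 f) (b⁻¹ * ω)) := by
        rw [mul_pow, mul_assoc]
    _ ≤ b ^ N * C := by gcongr; exact hC _

lemma bddAbove_weight_mul_twoJetNorm_FT (hf : HasIntegrableMoments 2 N f) {q : ℝ}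
    (hq : 0 ≤ q) (hqN : q + 1 ≤ N) :
    BddAbove (Set.range fun k : ℝ => (1 + |k| ^ q) * (1 + |k|) * twoJetNorm (FT f) k) := by
  obtain ⟨C, hC⟩ := hf.exists_one_add_abs_pow_mul_twoJetNorm_FT_le
  refine ⟨2 * C, Set.forall_mem_range.2 fun k => ?_⟩
  calc (1 + |k| ^ q) * (1 + |k|) * twoJetNorm (FT f) k
      ≤ 2 * (1 + |k|) ^ N * twoJetNorm (FT f) k :=
        mul_le_mul_of_nonneg_right (one_add_rpow_mul_one_add_le (abs_nonneg k) hq hqN)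
          (twoJetNorm_nonneg _ k)
    _ ≤ 2 * C := by linarith [hC k]

variable {a q : ℝ}

lemma FT_deriv_dilate (hf : HasIntegrableMoments K N f) (hN : 1 ≤ N) (ha : 0 < a) :
    FT (deriv (dilate a f)) = fun ω => a * Complex.I * ((a⁻¹ * ω) • FT f (a⁻¹ * ω)) := by
  funext ω
  have ha' : (a : ℂ) ≠ 0 := by exact_mod_cast ha.ne'
  rw [FT_deriv (integrable_dilate ha.ne' hf.integrable)
    (differentiable_dilate a (hf.differentiable hN)) (hf.integrable_deriv_dilate hN ha.ne'),
    FT_dilate ha, Complex.real_smul, Complex.real_smul]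
  push_cast
  field_simp

lemma contDiff_FT_deriv_dilate (hf : HasIntegrableMoments K N f) (hN : 1 ≤ N) (ha : 0 < a) :
    ContDiff ℝ K (FT (deriv (dilate a f))) := by
  have hdil : ContDiff ℝ K fun ω : ℝ => a⁻¹ * ω := by fun_prop
  rw [hf.FT_deriv_dilate hN ha]
  exact contDiff_const.mul (hdil.smul (hf.contDiff_FT.comp hdil))

lemma twoJetNorm_FT_deriv_dilate_le (hf : HasIntegrableMoments 2 N f) (hN : 1 ≤ N) (ha : 1 ≤ a)
    (ω : ℝ) :
    twoJetNorm (FT (deriv (dilate a f))) ω ≤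
      2 * a * ((1 + |a⁻¹ * ω|) * twoJetNorm (FT f) (a⁻¹ * ω)) := by
  have ha₀ : 0 < a := zero_lt_one.trans_le ha
  have ha_inv : |a⁻¹| ≤ 1 := by
    rw [abs_of_pos (inv_pos.2 ha₀)]
    exact inv_le_one_of_one_le₀ ha
  calc twoJetNorm (FT (deriv (dilate a f))) ω
      = a * twoJetNorm (fun ω => (a⁻¹ * ω) • FT f (a⁻¹ * ω)) ω := by
        rw [hf.FT_deriv_dilate hN ha₀, twoJetNorm_const_mul]
        simp [abs_of_pos ha₀]
    _ ≤ a * twoJetNorm (fun k => k • FT f k) (a⁻¹ * ω) := by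
        gcongr
        exact twoJetNorm_comp_mul_left_le ha_inv (fun k => k • FT f k) ω
    _ ≤ a * (2 * (1 + |a⁻¹ * ω|) * twoJetNorm (FT f) (a⁻¹ * ω)) := by
        gcongr
        exact twoJetNorm_id_smul_le hf.contDiff_FT _
    _ = 2 * a * ((1 + |a⁻¹ * ω|) * twoJetNorm (FT f) (a⁻¹ * ω)) := by ring

lemma bqFun_deriv_dilate_le (hf : HasIntegrableMoments 2 N f) (hN : 1 ≤ N) (ha : 1 ≤ a)
    (hq : 0 ≤ q) (ω : ℝ) :
    bqFun q (deriv (dilate a f)) ω ≤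
      2 * a ^ (q + 1) * ((1 + |a⁻¹ * ω| ^ q) * (1 + |a⁻¹ * ω|) * twoJetNorm (FT f) (a⁻¹ * ω)) := by
  have ha₀ : 0 < a := zero_lt_one.trans_le ha
  have hweight : 1 + |ω| ^ q ≤ a ^ q * (1 + |a⁻¹ * ω| ^ q) := by
    simpa only [mul_inv_cancel_left₀ ha₀.ne'] using one_add_abs_mul_rpow_le ha hq (a⁻¹ * ω)
  calc bqFun q (deriv (dilate a f)) ω
      = (1 + |ω| ^ q) * twoJetNorm (FT (deriv (dilate a f))) ω := rfl
    _ ≤ a ^ q * (1 + |a⁻¹ * ω| ^ q) *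
          (2 * a * ((1 + |a⁻¹ * ω|) * twoJetNorm (FT f) (a⁻¹ * ω))) :=
        mul_le_mul hweight (hf.twoJetNorm_FT_deriv_dilate_le hN ha ω)
          (twoJetNorm_nonneg _ ω) (by positivity)
    _ = _ := by rw [Real.rpow_add_one ha₀.ne']; ring

theorem memBq_deriv_dilate_and_bqNorm_le (hf : HasIntegrableMoments 2 N f) (ha : 1 ≤ a)
    (hq : 0 ≤ q) (hqN : q + 1 ≤ N) :
    MemBq q (deriv (dilate a f)) ∧
      bqNorm q (deriv (dilate a f)) ≤
        2 * a ^ (q + 1) * ⨆ k : ℝ, (1 + |k| ^ q) * (1 + |k|) * twoJetNorm (FT f) k := by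
  have ha₀ : 0 < a := zero_lt_one.trans_le ha
  have hN : 1 ≤ N := by exact_mod_cast (by linarith : (1 : ℝ) ≤ N)
  have hpointwise (ω : ℝ) : bqFun q (deriv (dilate a f)) ω ≤
      2 * a ^ (q + 1) * ⨆ k : ℝ, (1 + |k| ^ q) * (1 + |k|) * twoJetNorm (FT f) k := by
    refine (hf.bqFun_deriv_dilate_le hN ha hq ω).trans ?_
    gcongr
    exact le_ciSup (hf.bddAbove_weight_mul_twoJetNorm_FT hq hqN) (a⁻¹ * ω)
  exact ⟨⟨hf.integrable_deriv_dilate hN ha₀.ne', hf.contDiff_FT_deriv_dilate hN ha₀,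
    ⟨_, Set.forall_mem_range.2 hpointwise⟩⟩, ciSup_le hpointwise⟩

end HasIntegrableMoments

lemma integrable_of_one_add_norm_rpow_mul_norm_le {V E : Type*} [NormedAddCommGroup V]
    [NormedSpace ℝ V] [FiniteDimensional ℝ V] [MeasurableSpace V] [BorelSpace V]
    [NormedAddCommGroup E] {μ : Measure V} [μ.IsAddHaarMeasure] {f : V → E} {r B : ℝ}
    (hf : AEStronglyMeasurable f μ) (hr : Module.finrank ℝ V < r)
    (hB : ∀ x, (1 + ‖x‖) ^ r * ‖f x‖ ≤ B) : Integrable f μ := by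
  refine ((integrable_one_add_norm hr).const_mul B).mono' hf (Eventually.of_forall fun x => ?_)
  rw [Real.rpow_neg (by positivity), ← div_eq_mul_inv, le_div_iff₀' (by positivity)]
  exact hB x

lemma norm_iteratedFDeriv_ofReal_comp {g : ℝ → ℝ} {n : ℕ} (hg : ContDiff ℝ n g) (x : ℝ) :
    ‖iteratedFDeriv ℝ n (fun y => (g y : ℂ)) x‖ = |iteratedDeriv n g x| := by
  rw [← Real.norm_eq_abs, ← norm_iteratedFDeriv_eq_norm_iteratedDeriv]
  exact Complex.ofRealLI.norm_iteratedFDeriv_comp_left hg.contDiffAt le_rfl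

lemma pow_mul_one_add_sq_le {x : ℝ} (hx : 0 ≤ x) {k M : ℕ} (hk : k ≤ 2) (hM : 0 < M) :
    x ^ k * (1 + x) ^ 2 ≤ (1 + x + x ^ 2) * (1 + x) ^ (M + 1) := by
  have hxk : x ^ k ≤ 1 + x + x ^ 2 := by
    interval_cases k <;> nlinarith
  gcongr
  · linarith
  · omega

lemma CondG1.hasIntegrableMoments {G : ℝ → ℝ → ℝ} {N : ℕ} (hG : CondG1 G N) :
    HasIntegrableMoments 2 (N + 2) fun x => (G x 1 : ℂ) := by
  obtain ⟨M, hM, hcd, hdecay⟩ := hG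
  have hcdC : ContDiff ℝ (N + 2 : ℕ) fun x => (G x 1 : ℂ) := Complex.ofRealCLM.contDiff.comp hcd
  refine ⟨hcdC, fun k hk n hn => ?_⟩
  obtain ⟨B, hB⟩ := hdecay n hn
  have hcont : Continuous (iteratedFDeriv ℝ n fun x => (G x 1 : ℂ)) :=
    hcdC.continuous_iteratedFDeriv (by exact_mod_cast hn)
  refine integrable_of_one_add_norm_rpow_mul_norm_le (r := 2) (B := B)
    (by fun_prop) (by simp) fun x => ?_
  rw [norm_iteratedFDeriv_ofReal_comp (hcd.of_le (by exact_mod_cast hn)), Real.rpow_two, norm_mul,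
    norm_pow, norm_norm, Real.norm_eq_abs, Real.norm_eq_abs, abs_abs, ← mul_assoc,
    mul_comm (_ ^ 2)]
  refine le_trans ?_ (hB x)
  rw [← sq_abs x]
  exact mul_le_mul_of_nonneg_right (pow_mul_one_add_sq_le (abs_nonneg x) hk hM) (abs_nonneg _)

lemma CondG2.eq_dilate {G : ℝ → ℝ → ℝ} {d t : ℝ} (hG : CondG2 G d) (ht : 0 < t) :
    (fun x => G x t) = dilate (t ^ (-1 / d)) fun x => G x 1 :=
  funext fun x => hG x t ht

lemma CondG2.Gp_eq_deriv_dilate {G : ℝ → ℝ → ℝ} {d p : ℝ} (hG : CondG2 G d) (hp : -1 < p) :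
    Gp G p = deriv (dilate ((p + 1) ^ (1 / d)) fun x => G x 1) := by
  have hp₁ : 0 < p + 1 := by linarith
  have hscale : (1 / (p + 1)) ^ (-1 / d) = (p + 1) ^ (1 / d) := by
    rw [one_div, neg_div, Real.inv_rpow hp₁.le, ← Real.rpow_neg hp₁.le, neg_neg]
  rw [← hscale, ← hG.eq_dilate (by positivity)]
  rfl

theorem Gp_in_Bq_general
    (G : ℝ → ℝ → ℝ) (N : ℕ) (q d p : ℝ) (hq : 0 ≤ q) (hqN : q ≤ N + 1) (hd : 0 < d) (hp : 0 ≤ p)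
    (hG1 : CondG1 G N) (hG2 : CondG2 G d) :
    MemBqR q (Gp G p) ∧
      bqNormR q (Gp G p) ≤
        2 * (p + 1) ^ ((q + 1) / d) *
          ⨆ k : ℝ, (1 + |k| ^ q) * (1 + |k|) *
            (‖FTr (fun x => G x 1) k‖ + ‖deriv (FTr fun x => G x 1) k‖ +
              ‖deriv (deriv (FTr fun x => G x 1)) k‖) := by
  have hdiff : Differentiable ℝ fun x => G x 1 := by
    obtain ⟨_, _, hcd, _⟩ := hG1
    exact hcd.differentiable (by simp)
  have ha : 1 ≤ (p + 1) ^ (1 / d) := Real.one_le_rpow (by linarith) (by positivity)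
  have hpow : (p + 1) ^ ((q + 1) / d) = ((p + 1) ^ (1 / d)) ^ (q + 1) := by
    rw [← Real.rpow_mul (by positivity), one_div_mul_eq_div]
  rw [MemBqR, bqNormR, hG2.Gp_eq_deriv_dilate (by linarith), ofReal_deriv_dilate _ hdiff,
    hpow]
  exact hG1.hasIntegrableMoments.memBq_deriv_dilate_and_bqNorm_le ha hq
    (by push_cast; linarith)

/-- Lemma 2.5: `G_p ∈ B_q` with the explicit bound `C_{d,p,q}`. -/
theorem Gp_in_Bq
    (G : ℝ → ℝ → ℝ) (q : ℕ) (d p : ℝ) (hq : 1 < q) (hd : 0 < d) (hp : 0 < p)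
    (hG : CondsG G q d) :
    MemBqR q (Gp G p) ∧
      bqNormR q (Gp G p) ≤
        2 * (p + 1) ^ (((q : ℝ) + 1) / d) *
          ⨆ k : ℝ, (1 + |k| ^ (q : ℝ)) * (1 + |k|) *
            (‖FTr (fun x => G x 1) k‖ + ‖deriv (FTr fun x => G x 1) k‖ +
              ‖deriv (deriv (FTr fun x => G x 1)) k‖) := by
  exact Gp_in_Bq_general G q q d p q.cast_nonneg (by linarith) hd hp.le hG.1 hG.2.1
end

section
/- (Contraction Lemma) Given q > 1, if g ∈ B_q satisfies ĝ(0) = ĝ′(0) = 0, then there is a constant C = C(d,p,q) > 0, independent of L, n and g, such that ‖R⁰_{L,n} g‖ ≤ (C/L^{(p+1)/d}) ‖g‖ for all L > L₁ and all integers n ≥ 0. -/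
open MeasureTheory Filter Topology

/-!
With `λ = L^((p+1)/d)` and `κ = (s_n(L) / L^(p+1))^(1/d)`, conditions (G) give
`(R⁰_{L,n} g)^ (ω) = λ Ĝ(κω) ĝ(ω/λ)`, where `Ĝ` is the transform of `G(·, 1)`. Since `ĝ` and `ĝ′`
vanish at `0`, Taylor's formula bounds the `k`-th derivative of `ω ↦ ĝ(ω/λ)` by
`λ⁻² ‖g‖ |ω|^(2-k)` for `k ≤ 2`; together with the prefactor `λ` this is the gain `λ⁻¹`. The decay
of `Ĝ` and its derivatives, coming from the smoothness of `G(·, 1)`, absorbs both the growth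
`|ω|^(2-k)` and the weight `1 + |ω|^q`. Apart from this gain, the bound depends on `L` and `n` only
through `κ`, and `L > L₁` keeps `κ` in a fixed compact subset of `(0, ∞)`.
-/

open scoped FourierTransform Convolution

section Derivatives

variable {E : Type*} [NormedAddCommGroup E] [NormedSpace ℝ E]

lemma norm_le_mul_abs_pow_succ_of_norm_deriv_le {f : ℝ → E} {N : ℝ} {n : ℕ}
    (hf : Differentiable ℝ f) (hf0 : f 0 = 0) (hN : ∀ x, ‖deriv f x‖ ≤ N * |x| ^ n) (x : ℝ) :
    ‖f x‖ ≤ N * |x| ^ (n + 1) := by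
  have hN0 : 0 ≤ N := by simpa using (norm_nonneg _).trans (hN 1)
  have hbound : ∀ y ∈ Set.Icc (-|x|) |x|, ‖deriv f y‖ ≤ N * |x| ^ n := fun y hy ↦
    (hN y).trans (mul_le_mul_of_nonneg_left (pow_le_pow_left₀ (abs_nonneg y) (abs_le.2 hy) n) hN0)
  have hmvt := (convex_Icc (-|x|) |x|).norm_image_sub_le_of_norm_deriv_le
    (fun y _ ↦ hf y) hbound (x := 0) (y := x) (by simp) (abs_le.1 le_rfl)
  rwa [hf0, sub_zero, sub_zero, Real.norm_eq_abs, mul_assoc, ← pow_succ] at hmvt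

lemma norm_iteratedDeriv_le_of_iteratedDeriv_zero_eq_zero {f : ℝ → E} {N : ℝ} {m k : ℕ}
    (hf : ContDiff ℝ m f) (hf0 : ∀ i < m, iteratedDeriv i f 0 = 0)
    (hN : ∀ x, ‖iteratedDeriv m f x‖ ≤ N) (hk : k ≤ m) (x : ℝ) :
    ‖iteratedDeriv k f x‖ ≤ N * |x| ^ (m - k) := by
  induction hk using Nat.decreasingInduction generalizing x with
  | self => simpa using hN x
  | of_succ k hk ih =>
    rw [show m - k = m - (k + 1) + 1 by lia]
    refine norm_le_mul_abs_pow_succ_of_norm_deriv_le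
      (hf.differentiable_iteratedDeriv k (mod_cast hk)) (hf0 k hk) (fun y ↦ ?_) x
    rw [← iteratedDeriv_succ]
    exact ih y

lemma norm_iteratedDeriv_comp_mul_left {f : ℝ → E} {k : ℕ} (hf : ContDiff ℝ k f) (r x : ℝ) :
    ‖iteratedDeriv k (fun y ↦ f (r * y)) x‖ = |r| ^ k * ‖iteratedDeriv k f (r * x)‖ := by
  rw [iteratedDeriv_comp_const_smul hf, norm_smul, norm_pow, Real.norm_eq_abs]

lemma norm_iteratedDeriv_comp_mul_left_le {f : ℝ → E} {N : ℝ} {m k : ℕ}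
    (hf : ContDiff ℝ m f) (hf0 : ∀ i < m, iteratedDeriv i f 0 = 0)
    (hN : ∀ x, ‖iteratedDeriv m f x‖ ≤ N) (hk : k ≤ m) (r x : ℝ) :
    ‖iteratedDeriv k (fun y ↦ f (r * y)) x‖ ≤ |r| ^ m * N * |x| ^ (m - k) := by
  refine norm_iteratedDeriv_le_of_iteratedDeriv_zero_eq_zero (by fun_prop) (fun i hi ↦ ?_)
    (fun y ↦ ?_) hk x
  · rw [iteratedDeriv_comp_const_smul (hf.of_le (mod_cast hi.le))]
    simp only [mul_zero, hf0 i hi, smul_zero]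
  · rw [norm_iteratedDeriv_comp_mul_left hf]
    gcongr
    exact hN _

lemma one_add_abs_le_mul_one_add_abs_mul {κ : ℝ} (hκ : 0 < κ) (x : ℝ) :
    1 + |x| ≤ (1 + κ⁻¹) * (1 + |κ * x|) := by
  have hx : κ⁻¹ * |κ * x| = |x| := by rw [abs_mul, abs_of_pos hκ, inv_mul_cancel_left₀ hκ.ne']
  nlinarith [inv_pos.2 hκ, abs_nonneg (κ * x)]

lemma one_add_abs_pow_mul_norm_iteratedDeriv_comp_mul_left_le {f : ℝ → E} {κ K : ℝ} {n k : ℕ}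
    (hf : ContDiff ℝ k f) (hκ : 0 < κ)
    (hK : ∀ x, (1 + |x|) ^ n * ‖iteratedDeriv k f x‖ ≤ K) (x : ℝ) :
    (1 + |x|) ^ n * ‖iteratedDeriv k (fun y ↦ f (κ * y)) x‖ ≤ κ ^ k * ((1 + κ⁻¹) ^ n * K) :=
  calc
    _ ≤ ((1 + κ⁻¹) * (1 + |κ * x|)) ^ n * (κ ^ k * ‖iteratedDeriv k f (κ * x)‖) := by
      rw [norm_iteratedDeriv_comp_mul_left hf, abs_of_pos hκ]
      gcongr
      exact one_add_abs_le_mul_one_add_abs_mul hκ x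
    _ = κ ^ k * ((1 + κ⁻¹) ^ n * ((1 + |κ * x|) ^ n * ‖iteratedDeriv k f (κ * x)‖)) := by
      rw [mul_pow]
      ring
    _ ≤ κ ^ k * ((1 + κ⁻¹) ^ n * K) := by
      gcongr
      exact hK _

variable {A : Type*} [NormedRing A] [NormedAlgebra ℝ A]

lemma one_add_abs_pow_mul_norm_iteratedDeriv_mul_le {f g : ℝ → A} {κ K N x : ℝ} {q m j : ℕ}
    (hf : ContDiff ℝ m f) (hg : ContDiff ℝ m g)
    (hfK : ∀ i ≤ m, (1 + |x|) ^ (q + m) * ‖iteratedDeriv i f x‖ ≤ κ ^ i * K)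
    (hgN : ∀ i ≤ m, ‖iteratedDeriv i g x‖ ≤ N * |x| ^ (m - i)) (hj : j ≤ m) :
    (1 + |x|) ^ q * ‖iteratedDeriv j (fun y ↦ f y * g y) x‖ ≤ K * N * (1 + κ) ^ j := by
  have hN0 : 0 ≤ N := by simpa using (norm_nonneg _).trans (hgN m le_rfl)
  have hgN' : ∀ i ≤ m, ‖iteratedDeriv i g x‖ ≤ N * (1 + |x|) ^ m := fun i hi ↦ calc
    _ ≤ N * |x| ^ (m - i) := hgN i hi
    _ ≤ N * (1 + |x|) ^ (m - i) := by gcongr; linarith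
    _ ≤ N * (1 + |x|) ^ m := by gcongr <;> linarith [abs_nonneg x, m.sub_le i]
  have hterm : ∀ i ≤ j, (1 + |x|) ^ q *
      (j.choose i * ‖iteratedDeriv i f x‖ * ‖iteratedDeriv (j - i) g x‖) ≤
        K * N * (κ ^ i * j.choose i) := fun i hi ↦ calc
    _ ≤ (1 + |x|) ^ q * (j.choose i * ‖iteratedDeriv i f x‖ * (N * (1 + |x|) ^ m)) := by
      gcongr
      exact hgN' _ (by lia)
    _ = j.choose i * N * ((1 + |x|) ^ (q + m) * ‖iteratedDeriv i f x‖) := by ring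
    _ ≤ j.choose i * N * (κ ^ i * K) :=
      mul_le_mul_of_nonneg_left (hfK i (hi.trans hj)) (by positivity)
    _ = K * N * (κ ^ i * j.choose i) := by ring
  have hleibniz := norm_iteratedFDeriv_mul_le hf hg x (n := j) (mod_cast hj)
  simp only [norm_iteratedFDeriv_eq_norm_iteratedDeriv] at hleibniz
  calc
    _ ≤ (1 + |x|) ^ q * ∑ i ∈ Finset.range (j + 1),
        j.choose i * ‖iteratedDeriv i f x‖ * ‖iteratedDeriv (j - i) g x‖ := by gcongr
    _ ≤ ∑ i ∈ Finset.range (j + 1), K * N * (κ ^ i * j.choose i) := by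
      rw [Finset.mul_sum]
      exact Finset.sum_le_sum fun i hi ↦ hterm i (Finset.mem_range_succ_iff.1 hi)
    _ = K * N * (1 + κ) ^ j := by
      rw [← Finset.mul_sum, add_comm 1 κ, add_pow]
      simp only [one_pow, mul_one]

lemma one_add_abs_pow_mul_norm_iteratedDeriv_comp_mul_comp_le {f g : ℝ → A} {κ K N : ℝ}
    {q m j : ℕ} (hf : ContDiff ℝ m f) (hg : ContDiff ℝ m g) (hκ : 0 < κ)
    (hK : ∀ i ≤ m, ∀ x, (1 + |x|) ^ (q + m) * ‖iteratedDeriv i f x‖ ≤ K)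
    (hg0 : ∀ i < m, iteratedDeriv i g 0 = 0) (hN : ∀ x, ‖iteratedDeriv m g x‖ ≤ N)
    (hj : j ≤ m) (r x : ℝ) :
    (1 + |x|) ^ q * ‖iteratedDeriv j (fun y ↦ f (κ * y) * g (r * y)) x‖ ≤
      (1 + κ⁻¹) ^ (q + m) * K * (|r| ^ m * N) * (1 + κ) ^ j :=
  one_add_abs_pow_mul_norm_iteratedDeriv_mul_le
    (by fun_prop) (by fun_prop)
    (fun i hi ↦ one_add_abs_pow_mul_norm_iteratedDeriv_comp_mul_left_le
      (hf.of_le (mod_cast hi)) hκ (hK i hi) x)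
    (fun _ hi ↦ norm_iteratedDeriv_comp_mul_left_le hg hg0 hN hi r x) hj

end Derivatives

section FourierTransform

lemma FT_eq_fourier (f : ℝ → ℂ) : FT f = fun ω ↦ 𝓕 f ((2 * Real.pi)⁻¹ * ω) := by
  ext ω
  rw [Real.fourier_real_eq_integral_exp_smul]
  unfold FT
  congr! 4 with x
  push_cast
  field_simp

lemma FT_comp_mul_left (f : ℝ → ℂ) {a : ℝ} (ha : a ≠ 0) (ω : ℝ) :
    FT (fun x ↦ f (a * x)) ω = ((|a| : ℝ) : ℂ)⁻¹ * FT f (a⁻¹ * ω) := by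
  have h := Measure.integral_comp_mul_left
    (fun x : ℝ ↦ Complex.exp (-(Complex.I * (a⁻¹ * ω : ℝ) * x)) * f x) a
  rw [abs_inv, Complex.real_smul, Complex.ofReal_inv] at h
  unfold FT
  rw [← h]
  congr! 4 with x
  have ha' : (a : ℂ) ≠ 0 := mod_cast ha
  push_cast
  field_simp

lemma FT_const_mul (f : ℝ → ℂ) (a : ℂ) (ω : ℝ) : FT (fun x ↦ a * f x) ω = a * FT f ω := by
  simp only [FT, mul_left_comm _ a, integral_const_mul]

lemma FTr_const_mul_comp_mul_left (f : ℝ → ℝ) (a : ℝ) {b : ℝ} (hb : b ≠ 0) (ω : ℝ) :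
    FTr (fun x ↦ a * f (b * x)) ω = (a / |b|) • FTr f (b⁻¹ * ω) := by
  simp only [FTr, Complex.ofReal_mul]
  rw [FT_const_mul (fun x ↦ (f (b * x) : ℂ)), FT_comp_mul_left (fun x ↦ (f x : ℂ)) hb,
    Complex.real_smul, Complex.ofReal_div, div_eq_mul_inv, mul_assoc]

lemma FT_convolution {k f : ℝ → ℂ} (hk : Integrable k) (hf : Integrable f) (ω : ℝ) :
    FT (fun x ↦ ∫ y, k (x - y) * f y) ω = FT k ω * FT f ω := by
  have hconv : (fun x ↦ ∫ y, k (x - y) * f y) =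
      f ⋆[ContinuousLinearMap.mul ℂ ℂ, volume] k := by
    ext x
    simp only [convolution, ContinuousLinearMap.mul_apply', mul_comm]
  simp only [FT_eq_fourier]
  rw [hconv, Real.fourier_mul_convolution_eq hf hk, mul_comm]

lemma contDiff_FT {f : ℝ → ℂ} {m : ℕ} (hf : ∀ k ≤ m, Integrable fun x ↦ |x| ^ k * ‖f x‖) :
    ContDiff ℝ m (FT f) := by
  have hcont : ContDiff ℝ (m : ℕ∞) (𝓕 f) :=
    Real.contDiff_fourier fun k hk ↦ hf k (mod_cast hk)
  rw [FT_eq_fourier]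
  exact hcont.comp (contDiff_const.mul contDiff_id)

lemma exists_abs_pow_mul_norm_iteratedDeriv_FT_le {f : ℝ → ℂ} {k n : ℕ} (hf : ContDiff ℝ n f)
    (hint : ∀ i ≤ k, ∀ j ≤ n, Integrable fun x ↦ |x| ^ i * ‖iteratedDeriv j f x‖) :
    ∃ B, ∀ ω, |ω| ^ n * ‖iteratedDeriv k (FT f) ω‖ ≤ B := by
  have hcont : ContDiff ℝ (k : ℕ∞) (𝓕 f) := Real.contDiff_fourier fun i hi ↦ by
    simpa using hint i (mod_cast hi) 0 n.zero_le
  have hfourier := Real.pow_mul_norm_iteratedFDeriv_fourier_le (K := k) (N := n) (f := f)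
    hf (fun i j hi hj ↦ by
      simpa only [norm_iteratedFDeriv_eq_norm_iteratedDeriv, Real.norm_eq_abs] using
        hint i (mod_cast hi) j (mod_cast hj)) (k := k) (n := n) le_rfl le_rfl
  simp only [norm_iteratedFDeriv_eq_norm_iteratedDeriv, Real.norm_eq_abs] at hfourier
  set B := (2 * Real.pi) ^ k * (2 * k + 2) ^ n * ∑ p ∈ Finset.range (k + 1) ×ˢ Finset.range (n + 1),
    ∫ v, |v| ^ p.1 * ‖iteratedDeriv p.2 f v‖
  set r := (2 * Real.pi)⁻¹
  have hr : 0 < r := by positivity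
  have hscale : ∀ ω, r⁻¹ ^ n * |r * ω| ^ n = |ω| ^ n := fun ω ↦ by
    rw [← mul_pow, abs_mul, abs_of_pos hr, inv_mul_cancel_left₀ hr.ne']
  refine ⟨r⁻¹ ^ n * r ^ k * B, fun ω ↦ ?_⟩
  rw [FT_eq_fourier, norm_iteratedDeriv_comp_mul_left hcont, abs_of_pos hr]
  calc
    _ = r⁻¹ ^ n * r ^ k * (|r * ω| ^ n * ‖iteratedDeriv k (𝓕 f) (r * ω)‖) := by
      rw [← hscale ω]
      ring
    _ ≤ r⁻¹ ^ n * r ^ k * B := by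
      gcongr
      exact hfourier _

lemma exists_one_add_abs_pow_mul_norm_iteratedDeriv_FT_le {f : ℝ → ℂ} {m n : ℕ}
    (hf : ContDiff ℝ n f)
    (hint : ∀ k ≤ m, ∀ j ≤ n, Integrable fun x ↦ |x| ^ k * ‖iteratedDeriv j f x‖) :
    ∃ K > 0, ∀ k ≤ m, ∀ ω, (1 + |ω|) ^ n * ‖iteratedDeriv k (FT f) ω‖ ≤ K := by
  have hbound : ∀ k ≤ m, ∃ B, ∀ ω, (1 + |ω|) ^ n * ‖iteratedDeriv k (FT f) ω‖ ≤ B := by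
    intro k hk
    obtain ⟨B₀, hB₀⟩ := exists_abs_pow_mul_norm_iteratedDeriv_FT_le (k := k) (n := 0)
      (hf.of_le (mod_cast n.zero_le)) fun i hi j hj ↦ hint i (hi.trans hk) j (by lia)
    obtain ⟨B, hB⟩ := exists_abs_pow_mul_norm_iteratedDeriv_FT_le hf
      fun i hi ↦ hint i (hi.trans hk)
    refine ⟨2 ^ (n - 1) * (B₀ + B), fun ω ↦ ?_⟩
    calc
      _ ≤ 2 ^ (n - 1) * (1 ^ n + |ω| ^ n) * ‖iteratedDeriv k (FT f) ω‖ := by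
        gcongr
        exact add_pow_le zero_le_one (abs_nonneg ω) n
      _ = 2 ^ (n - 1) * (|ω| ^ 0 * ‖iteratedDeriv k (FT f) ω‖ +
            |ω| ^ n * ‖iteratedDeriv k (FT f) ω‖) := by ring
      _ ≤ 2 ^ (n - 1) * (B₀ + B) := by
        gcongr
        exacts [hB₀ ω, hB ω]
  choose! B hB using hbound
  obtain ⟨K, hK⟩ := ((Finset.range (m + 1)).image B).exists_le
  refine ⟨max K 1, by positivity, fun k hk ω ↦ (hB k hk ω).trans (le_max_of_le_left (hK _ ?_))⟩
  exact Finset.mem_image_of_mem B (Finset.mem_range_succ_iff.2 hk)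

end FourierTransform

section Norm

lemma bqFun_eq_sum (q : ℝ) (f : ℝ → ℂ) (ω : ℝ) :
    bqFun q f ω = (1 + |ω| ^ q) * ∑ j ∈ Finset.range 3, ‖iteratedDeriv j (FT f) ω‖ := by
  simp only [bqFun, Finset.sum_range_succ, Finset.sum_range_zero, zero_add, iteratedDeriv_zero,
    iteratedDeriv_succ]

lemma MemBq.norm_iteratedDeriv_FT_le {q : ℝ} {f : ℝ → ℂ} (hf : MemBq q f) {k : ℕ} (hk : k ≤ 2)
    (ω : ℝ) : ‖iteratedDeriv k (FT f) ω‖ ≤ bqNorm q f := by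
  refine le_trans ?_ (le_ciSup hf.2.2 ω)
  rw [bqFun_eq_sum]
  refine (Finset.single_le_sum (f := fun j ↦ ‖iteratedDeriv j (FT f) ω‖)
    (fun _ _ ↦ norm_nonneg _) (Finset.mem_range_succ_iff.2 hk)).trans ?_
  exact le_mul_of_one_le_left (by positivity) (by linarith [Real.rpow_nonneg (abs_nonneg ω) q])

lemma bqFun_natCast_le {q : ℕ} {f : ℝ → ℂ} {B ω : ℝ}
    (hB : ∀ j ≤ 2, (1 + |ω|) ^ q * ‖iteratedDeriv j (FT f) ω‖ ≤ B) : bqFun q f ω ≤ 6 * B := by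
  have hone : 1 ≤ (1 + |ω|) ^ q := one_le_pow₀ (by linarith [abs_nonneg ω])
  have hpow : |ω| ^ q ≤ (1 + |ω|) ^ q := by gcongr; linarith
  have hsum : ∑ j ∈ Finset.range 3, (1 + |ω|) ^ q * ‖iteratedDeriv j (FT f) ω‖ ≤ 3 * B := by
    simpa using Finset.sum_le_card_nsmul (Finset.range 3) _ B
      fun j hj ↦ hB j (Finset.mem_range_succ_iff.1 hj)
  rw [← Finset.mul_sum] at hsum
  rw [bqFun_eq_sum, Real.rpow_natCast]
  calc
    _ ≤ 2 * (1 + |ω|) ^ q * ∑ j ∈ Finset.range 3, ‖iteratedDeriv j (FT f) ω‖ := by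
      gcongr
      linarith
    _ ≤ 6 * B := by linarith

end Norm

section Kernel

lemma norm_iteratedDeriv_ofReal_comp {f : ℝ → ℝ} {k : ℕ} (hf : ContDiff ℝ k f) (x : ℝ) :
    ‖iteratedDeriv k (fun y ↦ (f y : ℂ)) x‖ = |iteratedDeriv k f x| := by
  rw [← Real.norm_eq_abs, ← norm_iteratedFDeriv_eq_norm_iteratedDeriv,
    ← norm_iteratedFDeriv_eq_norm_iteratedDeriv]
  exact Complex.ofRealLI.norm_iteratedFDeriv_comp_left hf.contDiffAt le_rfl

lemma integrable_abs_pow_mul_norm_of_decay {E : Type*} [NormedAddCommGroup E] {f : ℝ → E}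
    {B : ℝ} {k m : ℕ} (hf : AEStronglyMeasurable f) (hkm : k ≤ m)
    (hB : ∀ x, (1 + |x|) ^ m * (1 + x ^ 2) * ‖f x‖ ≤ B) :
    Integrable fun x ↦ |x| ^ k * ‖f x‖ := by
  refine (integrable_inv_one_add_sq.const_mul B).mono' (by fun_prop) (ae_of_all _ fun x ↦ ?_)
  rw [Real.norm_of_nonneg (by positivity), ← div_eq_mul_inv, le_div_iff₀ (by positivity)]
  calc
    |x| ^ k * ‖f x‖ * (1 + x ^ 2) ≤ (1 + |x|) ^ k * ‖f x‖ * (1 + x ^ 2) := by gcongr; linarith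
    _ ≤ (1 + |x|) ^ m * ‖f x‖ * (1 + x ^ 2) := by gcongr; linarith [abs_nonneg x]
    _ = (1 + |x|) ^ m * (1 + x ^ 2) * ‖f x‖ := by ring
    _ ≤ B := hB x

variable {G : ℝ → ℝ → ℝ} {q : ℕ} {d : ℝ}

lemma CondG1.contDiff (hG : CondG1 G q) : ContDiff ℝ (q + 2 : ℕ) fun x ↦ (G x 1 : ℂ) := by
  obtain ⟨_, _, hsmooth, _⟩ := hG
  exact Complex.ofRealCLM.contDiff.comp hsmooth

lemma CondG1.integrable_abs_pow_mul_norm_iteratedDeriv (hG : CondG1 G q) {k j : ℕ}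
    (hk : k ≤ 2) (hj : j ≤ q + 2) :
    Integrable fun x ↦ |x| ^ k * ‖iteratedDeriv j (fun y ↦ (G y 1 : ℂ)) x‖ := by
  have hmeas : Continuous (iteratedDeriv j fun y ↦ (G y 1 : ℂ)) :=
    hG.contDiff.continuous_iteratedDeriv j (mod_cast hj)
  obtain ⟨M, hM, hsmooth, hdecay⟩ := hG
  obtain ⟨B, hB⟩ := hdecay j hj
  refine integrable_abs_pow_mul_norm_of_decay (B := 2 * B) hmeas.aestronglyMeasurable hk fun x ↦ ?_
  rw [norm_iteratedDeriv_ofReal_comp (hsmooth.of_le (mod_cast hj))]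
  have hquad : (1 + |x|) ^ 2 ≤ 2 * (1 + |x| + x ^ 2) := by nlinarith [sq_abs x, sq_nonneg x]
  have hpow : 1 + x ^ 2 ≤ (1 + |x|) ^ (M + 1) := calc
    1 + x ^ 2 ≤ (1 + |x|) ^ 2 := by nlinarith [sq_abs x, abs_nonneg x]
    _ ≤ (1 + |x|) ^ (M + 1) := by gcongr <;> linarith [abs_nonneg x]
  calc
    _ ≤ 2 * (1 + |x| + x ^ 2) * (1 + |x|) ^ (M + 1) * |iteratedDeriv j (fun y ↦ G y 1) x| := by
      gcongr
    _ ≤ 2 * B := by linarith [hB x]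

lemma CondG1.integrable (hG : CondG1 G q) : Integrable fun x ↦ (G x 1 : ℂ) := by
  rw [← integrable_norm_iff hG.contDiff.continuous.aestronglyMeasurable]
  simpa using hG.integrable_abs_pow_mul_norm_iteratedDeriv zero_le_two (Nat.zero_le _)

lemma CondG1.contDiff_FTr (hG : CondG1 G q) : ContDiff ℝ 2 (FTr fun x ↦ G x 1) :=
  contDiff_FT (m := 2) fun _ hk ↦ by
    simpa using hG.integrable_abs_pow_mul_norm_iteratedDeriv hk (Nat.zero_le _)

lemma CondG1.exists_one_add_abs_pow_mul_norm_iteratedDeriv_FTr_le (hG : CondG1 G q) :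
    ∃ K > 0, ∀ k ≤ 2, ∀ ω,
      (1 + |ω|) ^ (q + 2) * ‖iteratedDeriv k (FTr fun x ↦ G x 1) ω‖ ≤ K :=
  exists_one_add_abs_pow_mul_norm_iteratedDeriv_FT_le hG.contDiff
    fun _ hk _ hj ↦ hG.integrable_abs_pow_mul_norm_iteratedDeriv hk hj

lemma CondG2.integrable (hG : CondG2 G d) (hint : Integrable fun x ↦ (G x 1 : ℂ)) {t : ℝ}
    (ht : 0 < t) : Integrable fun x ↦ (G x t : ℂ) := by
  simp only [hG _ t ht, Complex.ofReal_mul]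
  exact (hint.comp_mul_left' (Real.rpow_pos_of_pos ht _).ne').const_mul _

lemma CondG2.FTr_eq (hG : CondG2 G d) {t : ℝ} (ht : 0 < t) (ω : ℝ) :
    FTr (fun x ↦ G x t) ω = FTr (fun x ↦ G x 1) (t ^ (1 / d) * ω) := by
  have hpos : 0 < t ^ (-1 / d) := Real.rpow_pos_of_pos ht _
  have hinv : (t ^ (-1 / d))⁻¹ = t ^ (1 / d) := by rw [← Real.rpow_neg ht.le, neg_div, neg_neg]
  simp only [hG _ t ht]
  rw [FTr_const_mul_comp_mul_left (fun x ↦ G x 1) _ hpos.ne', abs_of_pos hpos,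
    div_self hpos.ne', one_smul, hinv]

end Kernel

section DiffusiveTime

variable {c : ℝ → ℝ} {p L₀ L : ℝ}

lemma one_lt_of_Lone_lt (hp : -1 < p) (hL : Lone p L₀ < L) : 1 < L := by
  have hexp : 0 < 1 / (p + 1) := one_div_pos.2 (by linarith)
  exact (Real.one_lt_rpow (by norm_num) hexp).trans ((le_max_right _ _).trans_lt hL)

lemma three_lt_rpow_of_Lone_lt (hp : -1 < p) (hL : Lone p L₀ < L) : 3 < L ^ (p + 1) := by
  have hp' : 0 < p + 1 := by linarith
  have hroot : (3 : ℝ) ^ (p + 1)⁻¹ < L := by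
    rw [← one_div]
    exact (le_max_right _ _).trans_lt hL
  exact (Real.rpow_inv_lt_iff_of_pos (by norm_num)
    (zero_lt_one.trans (one_lt_of_Lone_lt hp hL)).le hp').1 hroot

lemma CondL0.abs_rF_pow_le (hL₀ : CondL0 c p L₀) (hp : -1 < p) (hL : L₀ < L) (m : ℕ) :
    |rF c p (L ^ m)| ≤ (L ^ (p + 1)) ^ m / (4 * (p + 1)) := by
  have hp' : 0 < p + 1 := by linarith
  have hL1 : 1 < L := hL₀.1.trans hL
  rcases Nat.eq_zero_or_pos m with rfl | hm
  · simp only [rF, sF, pow_zero, intervalIntegral.integral_same, Real.one_rpow, sub_self, zero_div,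
      abs_zero]
    positivity
  · have hr := hL₀.2 (L ^ m) (hL.trans_le (le_self_pow₀ hL1.le hm.ne'))
    rw [← Real.rpow_pow_comm (by linarith), div_lt_iff₀ (by positivity)] at hr
    exact hr.le.trans_eq (by ring)

lemma sn_div_rpow_eq (hL : 0 < L) (n : ℕ) :
    sn c p L n L / L ^ (p + 1) = (1 - (L ^ (p + 1))⁻¹) / (p + 1) +
      (rF c p (L ^ (n + 1)) - rF c p (L ^ n)) / (L ^ (p + 1)) ^ (n + 1) := by
  have hs (m : ℕ) : sF c (L ^ m) = ((L ^ (p + 1)) ^ m - 1) / (p + 1) + rF c p (L ^ m) := by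
    rw [rF, ← Real.rpow_pow_comm hL.le, add_sub_cancel]
  rw [sn, ← pow_succ, hs, hs, Real.rpow_natCast_mul hL.le, ← Real.rpow_pow_comm hL.le]
  field_simp
  ring

lemma CondL0.sn_div_rpow_mem_Icc (hL₀ : CondL0 c p L₀) (hp : -1 < p) (hL : Lone p L₀ < L)
    (n : ℕ) : sn c p L n L / L ^ (p + 1) ∈ Set.Icc (1 / (3 * (p + 1))) (2 / (p + 1)) := by
  have hp' : 0 < p + 1 := by linarith
  have hL' : L₀ < L := (le_max_left _ _).trans_lt hL
  have hA := three_lt_rpow_of_Lone_lt hp hL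
  have hr := fun m ↦ hL₀.abs_rF_pow_le hp hL' m
  rw [sn_div_rpow_eq (zero_lt_one.trans (one_lt_of_Lone_lt hp hL))]
  set A := L ^ (p + 1)
  set ρ := (rF c p (L ^ (n + 1)) - rF c p (L ^ n)) / A ^ (n + 1)
  have hAinv : A⁻¹ < 1 / 3 := by rw [inv_lt_comm₀] <;> linarith
  have hAinv0 : 0 < A⁻¹ := by positivity
  have hρ : |ρ| ≤ (1 + A⁻¹) / 4 / (p + 1) := calc
    |ρ| ≤ (A ^ (n + 1) / (4 * (p + 1)) + A ^ n / (4 * (p + 1))) / A ^ (n + 1) := by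
      rw [abs_div, abs_of_pos (show 0 < A ^ (n + 1) by positivity)]
      gcongr
      exact (abs_sub _ _).trans (add_le_add (hr _) (hr _))
    _ = (1 + A⁻¹) / 4 / (p + 1) := by rw [pow_succ]; field_simp
  constructor
  · calc
      1 / (3 * (p + 1)) = 1 / 3 / (p + 1) := by field_simp
      _ ≤ ((1 - A⁻¹) - (1 + A⁻¹) / 4) / (p + 1) := by gcongr; linarith
      _ ≤ (1 - A⁻¹) / (p + 1) + ρ := by rw [sub_div]; linarith [neg_abs_le ρ]
  · calc
      (1 - A⁻¹) / (p + 1) + ρ ≤ ((1 - A⁻¹) + (1 + A⁻¹) / 4) / (p + 1) := by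
        rw [add_div]; linarith [le_abs_self ρ]
      _ ≤ 2 / (p + 1) := by gcongr; linarith

end DiffusiveTime

section RGOperator

variable {G : ℝ → ℝ → ℝ} {c g : ℝ → ℝ} {p d L t : ℝ} {n q : ℕ}

lemma FTr_linSol (hG : CondG2 G d) (hint : Integrable fun x ↦ (G x 1 : ℂ))
    (ht : 0 < sn c p L n t) (hg : Integrable fun x ↦ (g x : ℂ)) (ω : ℝ) :
    FTr (fun x ↦ linSol G c p L n g x t) ω =
      FTr (fun x ↦ G x 1) (sn c p L n t ^ (1 / d) * ω) * FTr g ω := by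
  rw [← hG.FTr_eq ht, FTr, FTr, FTr, ← FT_convolution (hG.integrable hint ht) hg]
  simp only [linSol, ← integral_complex_ofReal, Complex.ofReal_mul]

lemma FTr_RG0 (hG : CondG2 G d) (hint : Integrable fun x ↦ (G x 1 : ℂ)) (hL : 0 < L)
    (hs : 0 < sn c p L n L) (hg : Integrable fun x ↦ (g x : ℂ)) (ω : ℝ) :
    FTr (RG0 G c p d L n g) ω = L ^ ((p + 1) / d) •
      (FTr (fun x ↦ G x 1) ((sn c p L n L / L ^ (p + 1)) ^ (1 / d) * ω) *
        FTr g ((L ^ ((p + 1) / d))⁻¹ * ω)) := by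
  set lam := L ^ ((p + 1) / d) with hlam
  have hlam0 : 0 < lam := by positivity
  have hlam_sq : L ^ (2 * (p + 1) / d) = lam * lam := by
    rw [hlam, ← Real.rpow_add hL]
    ring_nf
  have htime : (sn c p L n L / L ^ (p + 1)) ^ (1 / d) = sn c p L n L ^ (1 / d) * lam⁻¹ := by
    rw [Real.div_rpow hs.le (by positivity), ← Real.rpow_mul hL.le, mul_one_div, div_eq_mul_inv]
  have hRG : RG0 G c p d L n g =
      fun x ↦ lam * lam * linSol G c p L n g (lam * x) L := by
    ext x
    rw [RG0, hlam_sq]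
  rw [hRG, FTr_const_mul_comp_mul_left (fun y ↦ linSol G c p L n g y L) _ hlam0.ne',
    FTr_linSol hG hint hs hg, htime, abs_of_pos hlam0, mul_div_cancel_right₀ _ hlam0.ne',
    mul_assoc (_ ^ _)]

lemma bqFun_RG0_le {K κ : ℝ} (hG1 : CondG1 G q) (hG2 : CondG2 G d)
    (hK : ∀ k ≤ 2, ∀ ω, (1 + |ω|) ^ (q + 2) * ‖iteratedDeriv k (FTr fun x ↦ G x 1) ω‖ ≤ K)
    (hL : 0 < L) (hs : 0 < sn c p L n L) (hκ : (sn c p L n L / L ^ (p + 1)) ^ (1 / d) = κ)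
    (hg : MemBqR q g) (hg0 : FTr g 0 = 0) (hg1 : deriv (FTr g) 0 = 0) (ω : ℝ) :
    bqFun q (fun x ↦ (RG0 G c p d L n g x : ℂ)) ω ≤
      6 * ((1 + κ⁻¹) ^ (q + 2) * K * (1 + κ) ^ 2) / L ^ ((p + 1) / d) * bqNormR q g := by
  set lam := L ^ ((p + 1) / d)
  have hlam0 : 0 < lam := by positivity
  have hκ0 : 0 < κ := hκ ▸ by positivity
  have hφ := hG1.contDiff_FTr
  have hψ : ContDiff ℝ 2 (FTr g) := hg.2.1
  have hψ0 : ∀ i < 2, iteratedDeriv i (FTr g) 0 = 0 := fun i hi ↦ by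
    interval_cases i
    exacts [by rwa [iteratedDeriv_zero], by rwa [iteratedDeriv_one]]
  have hN : ∀ ω, ‖iteratedDeriv 2 (FTr g) ω‖ ≤ bqNormR q g := hg.norm_iteratedDeriv_FT_le le_rfl
  have hN0 : 0 ≤ bqNormR q g := (norm_nonneg _).trans (hN 0)
  have hK0 : 0 ≤ K := le_trans (by positivity) (hK 0 zero_le_two 0)
  have hRG : FT (fun x ↦ (RG0 G c p d L n g x : ℂ)) =
      fun ω ↦ lam • (FTr (fun x ↦ G x 1) (κ * ω) * FTr g (lam⁻¹ * ω)) :=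
    hκ ▸ funext (FTr_RG0 hG2 hG1.integrable hL hs hg.1)
  refine (bqFun_natCast_le (B := lam * ((1 + κ⁻¹) ^ (q + 2) * K * (lam⁻¹ ^ 2 * bqNormR q g) *
    (1 + κ) ^ 2)) fun j hj ↦ ?_).trans_eq (by field_simp)
  have hprod := one_add_abs_pow_mul_norm_iteratedDeriv_comp_mul_comp_le (m := 2) hφ hψ hκ0 hK hψ0
    hN hj lam⁻¹ ω
  rw [abs_of_pos (inv_pos.2 hlam0)] at hprod
  have hsmooth : ContDiff ℝ 2 fun ω ↦ FTr (fun x ↦ G x 1) (κ * ω) * FTr g (lam⁻¹ * ω) := by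
    fun_prop
  rw [hRG, iteratedDeriv_fun_const_smul (hsmooth.of_le (mod_cast hj)).contDiffAt, norm_smul,
    Real.norm_of_nonneg hlam0.le, mul_left_comm]
  refine mul_le_mul_of_nonneg_left (hprod.trans ?_) hlam0.le
  gcongr
  linarith

end RGOperator

theorem contraction_lemma_general
    (G : ℝ → ℝ → ℝ) (q : ℕ) (d p : ℝ) (hp : -1 < p) (hd : 0 < d)
    (hG1 : CondG1 G q) (hG2 : CondG2 G d) :
    ∃ C : ℝ, 0 < C ∧ ∀ (c : ℝ → ℝ) (L₀ : ℝ), CondL0 c p L₀ → ∀ L : ℝ, Lone p L₀ < L →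
      ∀ (n : ℕ) (g : ℝ → ℝ), MemBqR q g → FTr g 0 = 0 → deriv (FTr g) 0 = 0 →
        bqNormR q (RG0 G c p d L n g) ≤ C / L ^ ((p + 1) / d) * bqNormR q g := by
  obtain ⟨K, hK0, hK⟩ := hG1.exists_one_add_abs_pow_mul_norm_iteratedDeriv_FTr_le
  have hp' : 0 < p + 1 := by linarith
  set a := (1 / (3 * (p + 1))) ^ (1 / d)
  set b := (2 / (p + 1)) ^ (1 / d)
  refine ⟨6 * ((1 + a⁻¹) ^ (q + 2) * K * (1 + b) ^ 2), by positivity, ?_⟩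
  intro c L₀ hL₀ L hL n g hg hg0 hg1
  have hL0 : 0 < L := zero_lt_one.trans (one_lt_of_Lone_lt hp hL)
  obtain ⟨hlo, hhi⟩ := hL₀.sn_div_rpow_mem_Icc hp hL n
  have hratio : 0 < sn c p L n L / L ^ (p + 1) := lt_of_lt_of_le (by positivity) hlo
  have hs : 0 < sn c p L n L := (div_pos_iff_of_pos_right (by positivity)).1 hratio
  have hκa : a ≤ (sn c p L n L / L ^ (p + 1)) ^ (1 / d) :=
    Real.rpow_le_rpow (by positivity) hlo (by positivity)
  have hκb : (sn c p L n L / L ^ (p + 1)) ^ (1 / d) ≤ b :=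
    Real.rpow_le_rpow hratio.le hhi (by positivity)
  refine ciSup_le fun ω ↦ (bqFun_RG0_le hG1 hG2 hK hL0 hs rfl hg hg0 hg1 ω).trans ?_
  have hN0 : 0 ≤ bqNormR q g := (norm_nonneg _).trans (hg.norm_iteratedDeriv_FT_le le_rfl 0)
  gcongr

/-- Lemma 2.8, Contraction Lemma: the linear RG operator
contracts on functions with zero mass and zero first momentum. -/
theorem contraction_lemma
    (G : ℝ → ℝ → ℝ) (q : ℕ) (d : ℝ) (c : ℝ → ℝ) (p L₀ : ℝ)
    (hq : 1 < q) (hd : 0 < d) (hG : CondsG G q d) (hc : CondC c p)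
    (hL₀ : CondL0 c p L₀) :
    ∃ C : ℝ, 0 < C ∧ ∀ L : ℝ, Lone p L₀ < L → ∀ n : ℕ, ∀ g : ℝ → ℝ,
      MemBqR q g → FTr g 0 = 0 → deriv (FTr g) 0 = 0 →
        bqNormR q (RG0 G c p d L n g) ≤ C / L ^ ((p + 1) / d) * bqNormR q g := by
  obtain ⟨C, hC, h⟩ := contraction_lemma_general G q d p (by linarith [hc.1]) hd hG.1 hG.2.1
  exact ⟨C, hC, h c L₀ hL₀⟩
end
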